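/- arXiv:math/0701265 — 3 statements merged into one kernel-verified Lean document; each statement's English description precedes it below -/
import Mathlib

section
/- Let α ≥ 2 and β > 0, and let x : ℤ → ℂ satisfy |x_n| ≤ β/(|n|+1)^α for all n ∈ ℤ. Then for every integer k ≥ 1 and every n ∈ ℤ, the k-fold convolution power satisfies |(x^{*k})_n| ≤ C^{k-1} β^k/(|n|+1)^α, where C = 2(2α+1)/(α-1). -/
open scoped Real
open Complex Filter

/-- Convolution of two two-sided sequences of complex numbers. -/
noncomputable def conv (x y : ℤ → ℂ) : ℤ → ℂ := fun n => ∑' k : ℤ, x k * y (n - k)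

/-- `convPow x k` is the `k`-fold convolution power `x^{*k}`;
`x^{*0}` is the unit (Kronecker delta at `0`). -/
noncomputable def convPow (x : ℤ → ℂ) : ℕ → ℤ → ℂ
  | 0 => fun n => if n = 0 then 1 else 0
  | k + 1 => conv (convPow x k) x

/-- Membership in `X_β`: decay `|x_n| ≤ β/(|n|+1)^2` and the symmetry `x_{-n} = conj x_n`. -/
def memX (β : ℝ) (x : ℤ → ℂ) : Prop :=
  (∀ n : ℤ, ‖x n‖ ≤ β / (|(n : ℝ)| + 1) ^ 2) ∧ (∀ n : ℤ, x (-n) = starRingEnd ℂ (x n))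

/-!
With `a = |k|`, `b = |n - k|`, `c = |n|`, the convolution estimate amounts to bounding
`∑ₖ ((c + 1) / ((a + 1) (b + 1))) ^ α` uniformly in `n`. By reflection take `n ≥ 0`, and by the
symmetry `k ↔ n - k` bound only the terms with `a ≤ b`. There the ratio is at most `1`, and at most
`2 / (a + 1)` because `c ≤ a + b ≤ 2 b`; for `k < 0` it is even at most `1 / (a + 1)` because
`c ≤ b`. Comparing with `∫ t ^ (-α)`, the terms `k < 0` contribute at most `1 / (α - 1)`, the terms
`k = 0, 1` at most `1` each, and the terms `k ≥ 2` at most `2 / (α - 1)`. Doubling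
`2 + 3 / (α - 1) = (2 α + 1) / (α - 1)` gives the constant.
-/

section RpowTail

variable {α : ℝ} {N : ℕ}

lemma summable_div_add_rpow (hα : 1 < α) (N : ℕ) :
    Summable fun m : ℕ => ((N : ℝ) / (m + N + 1)) ^ α := by
  have hsum := ((Real.summable_one_div_nat_add_rpow (N + 1) α).2 hα).mul_left ((N : ℝ) ^ α)
  refine hsum.congr fun m => ?_
  rw [abs_of_nonneg (by positivity), Real.div_rpow (by positivity) (by positivity), ← add_assoc,
    mul_one_div]

lemma tsum_add_rpow_neg_le (hα : 1 < α) (hN : 0 < N) :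
    ∑' m : ℕ, ((m : ℝ) + N + 1) ^ (-α) ≤ (N : ℝ) ^ (1 - α) / (α - 1) := by
  have hN' : (0 : ℝ) < N := by exact_mod_cast hN
  have hα' : -α < -1 := by linarith
  have antitone : AntitoneOn (fun t : ℝ => t ^ (-α)) (Set.Ici (N : ℝ)) :=
    (Real.antitoneOn_rpow_Ioi_of_exponent_nonpos (by linarith)).mono
      (Set.Ici_subset_Ioi.2 hN')
  have nonneg : ∀ t ∈ Set.Ioi (N : ℝ), 0 ≤ t ^ (-α) :=
    fun t ht => Real.rpow_nonneg (hN'.trans ht).le _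
  calc ∑' m : ℕ, ((m : ℝ) + N + 1) ^ (-α)
      ≤ ∫ t in Set.Ioi (N : ℝ), t ^ (-α) := by
        exact_mod_cast antitone.tsum_comp_add_le_integral N
          (integrableOn_Ioi_rpow_of_lt hα' hN') nonneg
    _ = (N : ℝ) ^ (1 - α) / (α - 1) := by
        rw [integral_Ioi_rpow_of_lt hα' hN', ← neg_sub 1 α, div_neg, neg_div, neg_add_eq_sub]

lemma tsum_div_add_rpow_le (hα : 1 < α) (hN : 0 < N) :
    ∑' m : ℕ, ((N : ℝ) / (m + N + 1)) ^ α ≤ N / (α - 1) := by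
  have hN' : (0 : ℝ) < N := by exact_mod_cast hN
  calc ∑' m : ℕ, ((N : ℝ) / (m + N + 1)) ^ α
      = (N : ℝ) ^ α * ∑' m : ℕ, ((m : ℝ) + N + 1) ^ (-α) := by
        rw [← tsum_mul_left]
        refine tsum_congr fun m => ?_
        rw [Real.div_rpow hN'.le (by positivity), Real.rpow_neg (by positivity), div_eq_mul_inv]
    _ ≤ (N : ℝ) ^ α * ((N : ℝ) ^ (1 - α) / (α - 1)) := by
        gcongr
        exact tsum_add_rpow_neg_le hα hN
    _ = N / (α - 1) := by
        rw [← mul_div_assoc, ← Real.rpow_add hN', add_sub_cancel, Real.rpow_one]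

end RpowTail

/-- With the weight `w n = |n| + 1`, the ratio `w n / (w k * w (n - k))`: its `α`-th power is the
`k`-th term of the convolution of `w ^ (-α)` with itself at `n`, relative to `w n ^ (-α)`. -/
noncomputable def weightRatio (n k : ℤ) : ℝ :=
  (|(n : ℝ)| + 1) / ((|(k : ℝ)| + 1) * (|(n : ℝ) - k| + 1))

section WeightRatio

variable {n k : ℤ}

lemma weightRatio_nonneg (n k : ℤ) : 0 ≤ weightRatio n k := by
  unfold weightRatio
  positivity

lemma weightRatio_sub_right (n k : ℤ) : weightRatio n (n - k) = weightRatio n k := by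
  simp only [weightRatio, Int.cast_sub, sub_sub_cancel, mul_comm]

lemma weightRatio_le_one (n k : ℤ) : weightRatio n k ≤ 1 := by
  refine div_le_one_of_le₀ ?_ (by positivity)
  have hmul := mul_nonneg (abs_nonneg (k : ℝ)) (abs_nonneg ((n : ℝ) - k))
  linarith [abs_sub_abs_le_abs_sub (n : ℝ) k]

lemma weightRatio_le_div {t : ℝ} (h : |(n : ℝ)| + 1 ≤ t * (|(n : ℝ) - k| + 1)) :
    weightRatio n k ≤ t / (|(k : ℝ)| + 1) := by
  rw [weightRatio, div_le_div_iff₀ (by positivity) (by positivity)]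
  calc (|(n : ℝ)| + 1) * (|(k : ℝ)| + 1)
      ≤ t * (|(n : ℝ) - k| + 1) * (|(k : ℝ)| + 1) := by gcongr
    _ = t * ((|(k : ℝ)| + 1) * (|(n : ℝ) - k| + 1)) := by ring

lemma weightRatio_le_two_div (h : |(k : ℝ)| ≤ |(n : ℝ) - k|) :
    weightRatio n k ≤ 2 / (|(k : ℝ)| + 1) :=
  weightRatio_le_div (by linarith [abs_sub_abs_le_abs_sub (n : ℝ) k])

lemma weightRatio_le_one_div (hn : 0 ≤ n) (hk : k < 0) :
    weightRatio n k ≤ 1 / (|(k : ℝ)| + 1) := by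
  have hn' : (0 : ℝ) ≤ n := by exact_mod_cast hn
  have hk' : (k : ℝ) < 0 := by exact_mod_cast hk
  apply weightRatio_le_div
  rw [abs_of_nonneg hn', abs_of_nonneg (by linarith)]
  linarith

end WeightRatio

/-- For `n ≥ 0`, a summable upper bound, independent of `n`, for those `weightRatio n k ^ α` with
`|k| ≤ |n - k|`. -/
noncomputable def ratioMajorant (α : ℝ) (k : ℤ) : ℝ :=
  if 0 ≤ k then min 1 (2 / (|(k : ℝ)| + 1)) ^ α else (1 / (|(k : ℝ)| + 1)) ^ α

section RatioMajorant

variable {α : ℝ} {n k : ℤ}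

lemma ratioMajorant_nonneg (α : ℝ) (k : ℤ) : 0 ≤ ratioMajorant α k := by
  unfold ratioMajorant
  split_ifs <;> positivity

lemma ratioMajorant_zero (α : ℝ) : ratioMajorant α 0 = 1 := by
  simp [ratioMajorant]

lemma ratioMajorant_one (α : ℝ) : ratioMajorant α 1 = 1 := by
  norm_num [ratioMajorant]

lemma ratioMajorant_natCast_add_two (α : ℝ) (m : ℕ) :
    ratioMajorant α (m + 2 : ℕ) = ((2 : ℕ) / ((m : ℝ) + (2 : ℕ) + 1)) ^ α := by
  have hle : (2 : ℝ) / (m + 2 + 1) ≤ 1 := div_le_one_of_le₀ (by linarith) (by positivity)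
  rw [ratioMajorant, if_pos (by positivity), Int.cast_natCast, Nat.abs_cast]
  push_cast
  rw [min_eq_right hle]

lemma ratioMajorant_neg_natCast_add_one (α : ℝ) (m : ℕ) :
    ratioMajorant α (-(m + 1)) = ((1 : ℕ) / ((m : ℝ) + (1 : ℕ) + 1)) ^ α := by
  rw [ratioMajorant, if_neg (by lia), Int.cast_neg, abs_neg, abs_of_nonneg (by positivity)]
  push_cast
  rfl

lemma summable_ratioMajorant_natCast (hα : 1 < α) :
    Summable fun m : ℕ => ratioMajorant α m := by
  rw [← summable_nat_add_iff 2]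
  simpa only [ratioMajorant_natCast_add_two] using summable_div_add_rpow hα 2

lemma summable_ratioMajorant_neg (hα : 1 < α) :
    Summable fun m : ℕ => ratioMajorant α (-(m + 1)) := by
  simpa only [ratioMajorant_neg_natCast_add_one] using summable_div_add_rpow hα 1

lemma summable_ratioMajorant (hα : 1 < α) : Summable (ratioMajorant α) :=
  .of_nat_of_neg_add_one (summable_ratioMajorant_natCast hα) (summable_ratioMajorant_neg hα)

lemma tsum_ratioMajorant_natCast_le (hα : 1 < α) :
    ∑' m : ℕ, ratioMajorant α m ≤ 2 + 2 / (α - 1) := by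
  have htail : ∑' m : ℕ, ratioMajorant α (m + 2 : ℕ) ≤ 2 / (α - 1) := by
    simpa only [ratioMajorant_natCast_add_two, Nat.cast_ofNat] using
      tsum_div_add_rpow_le hα two_pos
  rw [← (summable_ratioMajorant_natCast hα).sum_add_tsum_nat_add 2, Finset.sum_range_succ,
    Finset.sum_range_one, Nat.cast_zero, Nat.cast_one, ratioMajorant_zero, ratioMajorant_one]
  linarith

lemma tsum_ratioMajorant_neg_le (hα : 1 < α) :
    ∑' m : ℕ, ratioMajorant α (-(m + 1)) ≤ 1 / (α - 1) := by
  simpa only [ratioMajorant_neg_natCast_add_one, Nat.cast_one] using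
    tsum_div_add_rpow_le hα one_pos

lemma tsum_ratioMajorant_le (hα : 1 < α) :
    ∑' k : ℤ, ratioMajorant α k ≤ (2 * α + 1) / (α - 1) := by
  have hα' : α - 1 ≠ 0 := (sub_pos.2 hα).ne'
  calc ∑' k : ℤ, ratioMajorant α k
      = ∑' m : ℕ, ratioMajorant α m + ∑' m : ℕ, ratioMajorant α (-(m + 1)) :=
        tsum_of_nat_of_neg_add_one (summable_ratioMajorant_natCast hα)
          (summable_ratioMajorant_neg hα)
    _ ≤ 2 + 2 / (α - 1) + 1 / (α - 1) :=
        add_le_add (tsum_ratioMajorant_natCast_le hα) (tsum_ratioMajorant_neg_le hα)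
    _ = (2 * α + 1) / (α - 1) := by
        field_simp
        ring

lemma weightRatio_rpow_le_ratioMajorant (hα : 0 ≤ α) (hn : 0 ≤ n)
    (h : |(k : ℝ)| ≤ |(n : ℝ) - k|) : weightRatio n k ^ α ≤ ratioMajorant α k := by
  rw [ratioMajorant]
  split_ifs with hk
  · exact Real.rpow_le_rpow (weightRatio_nonneg n k)
      (le_min (weightRatio_le_one n k) (weightRatio_le_two_div h)) hα
  · exact Real.rpow_le_rpow (weightRatio_nonneg n k)
      (weightRatio_le_one_div hn (not_le.1 hk)) hα

lemma weightRatio_rpow_le_add (hα : 0 ≤ α) (hn : 0 ≤ n) (k : ℤ) :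
    weightRatio n k ^ α ≤ ratioMajorant α k + ratioMajorant α (n - k) := by
  rcases le_total |(k : ℝ)| |(n : ℝ) - k| with h | h
  · exact (weightRatio_rpow_le_ratioMajorant hα hn h).trans
      (le_add_of_nonneg_right (ratioMajorant_nonneg α _))
  · rw [← weightRatio_sub_right]
    refine (weightRatio_rpow_le_ratioMajorant hα hn ?_).trans
      (le_add_of_nonneg_left (ratioMajorant_nonneg α _))
    simpa only [Int.cast_sub, sub_sub_cancel] using h

lemma summable_ratioMajorant_sub_left (hα : 1 < α) (n : ℤ) :
    Summable fun k => ratioMajorant α (n - k) :=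
  (summable_ratioMajorant hα).comp_injective sub_right_injective

lemma summable_ratioMajorant_add (hα : 1 < α) (n : ℤ) :
    Summable fun k => ratioMajorant α k + ratioMajorant α (n - k) :=
  (summable_ratioMajorant hα).add (summable_ratioMajorant_sub_left hα n)

lemma summable_weightRatio_rpow (hα : 1 < α) (hn : 0 ≤ n) :
    Summable fun k => weightRatio n k ^ α :=
  .of_nonneg_of_le (fun k => Real.rpow_nonneg (weightRatio_nonneg n k) α)
    (weightRatio_rpow_le_add (by linarith) hn) (summable_ratioMajorant_add hα n)

lemma tsum_weightRatio_rpow_le (hα : 1 < α) (hn : 0 ≤ n) :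
    ∑' k, weightRatio n k ^ α ≤ 2 * (2 * α + 1) / (α - 1) := by
  calc ∑' k, weightRatio n k ^ α
      ≤ ∑' k, (ratioMajorant α k + ratioMajorant α (n - k)) :=
        (summable_weightRatio_rpow hα hn).tsum_le_tsum
          (weightRatio_rpow_le_add (by linarith) hn) (summable_ratioMajorant_add hα n)
    _ = 2 * ∑' k, ratioMajorant α k := by
        rw [(summable_ratioMajorant hα).tsum_add (summable_ratioMajorant_sub_left hα n), two_mul]
        exact congrArg _ ((Equiv.subLeft n).tsum_eq (ratioMajorant α))
    _ ≤ 2 * ((2 * α + 1) / (α - 1)) := by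
        gcongr
        exact tsum_ratioMajorant_le hα
    _ = 2 * (2 * α + 1) / (α - 1) := (mul_div_assoc _ _ _).symm

end RatioMajorant

lemma conv_neg (x y : ℤ → ℂ) (n : ℤ) :
    conv x y (-n) = conv (fun k => x (-k)) (fun k => y (-k)) n := by
  unfold conv
  rw [← (Equiv.neg ℤ).tsum_eq]
  simp only [Equiv.neg_apply, sub_neg_eq_add, neg_sub, add_comm, ← sub_eq_add_neg]

lemma convPow_one (x : ℤ → ℂ) : convPow x 1 = x := by
  funext n
  simp [convPow, conv]

/-- Polynomial decay `|x_n| ≤ A / (|n| + 1) ^ α` of order `α` with constant `A`. -/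
def HasPolyDecay (α A : ℝ) (x : ℤ → ℂ) : Prop :=
  ∀ n : ℤ, ‖x n‖ ≤ A / (|(n : ℝ)| + 1) ^ α

section HasPolyDecay

variable {α A B : ℝ} {x y : ℤ → ℂ}

lemma HasPolyDecay.nonneg (hx : HasPolyDecay α A x) : 0 ≤ A := by
  simpa using (norm_nonneg _).trans (hx 0)

lemma HasPolyDecay.comp_neg (hx : HasPolyDecay α A x) :
    HasPolyDecay α A (fun n => x (-n)) := fun n => by
  simpa using hx (-n)

lemma HasPolyDecay.norm_mul_le (hx : HasPolyDecay α A x) (hy : HasPolyDecay α B y) (n k : ℤ) :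
    ‖x k * y (n - k)‖ ≤ A * B / (|(n : ℝ)| + 1) ^ α * weightRatio n k ^ α := by
  have hA := hx.nonneg
  calc ‖x k * y (n - k)‖
      ≤ A / (|(k : ℝ)| + 1) ^ α * (B / (|((n - k : ℤ) : ℝ)| + 1) ^ α) := by
        rw [norm_mul]
        exact mul_le_mul (hx k) (hy (n - k)) (norm_nonneg _) (by positivity)
    _ = A * B / (|(n : ℝ)| + 1) ^ α * weightRatio n k ^ α := by
        rw [weightRatio, Real.div_rpow (by positivity) (by positivity),
          Real.mul_rpow (by positivity) (by positivity), Int.cast_sub]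
        field_simp

lemma HasPolyDecay.norm_conv_le_of_nonneg (hα : 1 < α) (hx : HasPolyDecay α A x)
    (hy : HasPolyDecay α B y) {n : ℤ} (hn : 0 ≤ n) :
    ‖conv x y n‖ ≤ 2 * (2 * α + 1) / (α - 1) * (A * B) / (|(n : ℝ)| + 1) ^ α := by
  have hA := hx.nonneg
  have hB := hy.nonneg
  calc ‖conv x y n‖
      ≤ A * B / (|(n : ℝ)| + 1) ^ α * ∑' k, weightRatio n k ^ α :=
        tsum_of_norm_bounded ((summable_weightRatio_rpow hα hn).hasSum.mul_left _)
          (hx.norm_mul_le hy n)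
    _ ≤ A * B / (|(n : ℝ)| + 1) ^ α * (2 * (2 * α + 1) / (α - 1)) := by
        gcongr
        exact tsum_weightRatio_rpow_le hα hn
    _ = 2 * (2 * α + 1) / (α - 1) * (A * B) / (|(n : ℝ)| + 1) ^ α := by ring

theorem HasPolyDecay.conv (hα : 1 < α) (hx : HasPolyDecay α A x)
    (hy : HasPolyDecay α B y) :
    HasPolyDecay α (2 * (2 * α + 1) / (α - 1) * (A * B)) (conv x y) := fun n => by
  rcases le_total 0 n with hn | hn
  · exact hx.norm_conv_le_of_nonneg hα hy hn
  · have hreflect := hx.comp_neg.norm_conv_le_of_nonneg hα hy.comp_neg (neg_nonneg.2 hn)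
    rwa [← conv_neg, neg_neg, Int.cast_neg, abs_neg] at hreflect

theorem HasPolyDecay.convPow_succ (hα : 1 < α) (hx : HasPolyDecay α A x) (k : ℕ) :
    HasPolyDecay α ((2 * (2 * α + 1) / (α - 1)) ^ k * A ^ (k + 1)) (convPow x (k + 1)) := by
  induction k with
  | zero => simpa only [zero_add, pow_zero, pow_one, one_mul, convPow_one] using hx
  | succ k ih =>
    rw [pow_succ', pow_succ A, mul_assoc, ← mul_assoc _ _ A]
    exact ih.conv hα hx

end HasPolyDecay

theorem convPow_estimate_general {α β : ℝ} (hα : 1 < α) {x : ℤ → ℂ}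
    (hx : ∀ n : ℤ, ‖x n‖ ≤ β / (|(n : ℝ)| + 1) ^ α) {k : ℕ} (hk : 1 ≤ k) (n : ℤ) :
    ‖convPow x k n‖ ≤ (2 * (2 * α + 1) / (α - 1)) ^ (k - 1) * β ^ k / (|(n : ℝ)| + 1) ^ α := by
  obtain ⟨m, rfl⟩ := Nat.exists_eq_add_of_le' hk
  exact HasPolyDecay.convPow_succ hα hx m n

/-- iterated convolution-power estimate
`|(x^{*k})_n| ≤ C^{k-1} β^k /(|n|+1)^α` with `C = 2(2α+1)/(α-1)`. -/
theorem convPow_estimate (α β : ℝ) (hα : 2 ≤ α) (hβ : 0 < β)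
    (x : ℤ → ℂ) (hx : ∀ n : ℤ, ‖x n‖ ≤ β / (|(n : ℝ)| + 1) ^ α) :
    ∀ k : ℕ, 1 ≤ k → ∀ n : ℤ,
      ‖convPow x k n‖ ≤ (2 * (2 * α + 1) / (α - 1)) ^ (k - 1) * β ^ k / (|(n : ℝ)| + 1) ^ α := by
  exact fun _ hk n => convPow_estimate_general (one_lt_two.trans_le hα) hx hk n
end

section
/- Let K > 0, τ > 0, α ≥ 2, β > 0, and let c : ℤ → ℂ satisfy |c_n| ≤ β/(|n|+1)^α for all n together with the equations i n c_n = -(K/τ) Σ_{k=0}^∞ ((-1)^k/(2k+1)!) (c^{*(2k+1)})_n e^{-inτ} for all n ∈ ℤ. Then there exists β' > 0 such that |c_n| ≤ β'/(|n|+1)^{α+1} for all n ∈ ℤ. -/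
open scoped Real
open Complex Filter

/-!
Sequences bounded by a multiple of `w n = (|n| + 1) ^ (-α)` form a convolution algebra when `1 < α`:
one of `k`, `n - k` has at least half the size of `n`, so `w k * w (n - k)` is at most
`2 ^ α * w n * (w k + w (n - k))`, and `w` is summable. Hence the convolution powers of `c` are
bounded by geometrically growing multiples of `w`, and a power series with infinite radius of
convergence evaluated at `c` is again bounded by a multiple of `w`. The equation identifies
`n * c n` with such a sequence up to a factor of constant modulus, which is worth one more
power of `|n| + 1`.
-/

/-- A nonnegative weight `w` on `ℤ` with `w * w ≤ C • w` for the convolution product, the condition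
under which the sequences dominated by multiples of `w` are closed under convolution. -/
structure IsSubconvolutive (C : ℝ) (w : ℤ → ℝ) : Prop where
  nonneg : ∀ n, 0 ≤ w n
  summable : ∀ n, Summable fun k => w k * w (n - k)
  tsum_le : ∀ n, ∑' k, w k * w (n - k) ≤ C * w n

namespace IsSubconvolutive

variable {C A B : ℝ} {w : ℤ → ℝ} {x y : ℤ → ℂ}

lemma const_nonneg (hw : IsSubconvolutive C w) (hw_zero : 0 < w 0) : 0 ≤ C :=
  nonneg_of_mul_nonneg_left
    ((tsum_nonneg fun k => mul_nonneg (hw.nonneg k) (hw.nonneg _)).trans (hw.tsum_le 0)) hw_zero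

lemma norm_conv_le (hw : IsSubconvolutive C w) (hA : 0 ≤ A) (hB : 0 ≤ B)
    (hx : ∀ n, ‖x n‖ ≤ A * w n) (hy : ∀ n, ‖y n‖ ≤ B * w n) (n : ℤ) :
    ‖conv x y n‖ ≤ A * (C * B) * w n := by
  have norm_term_le (k : ℤ) : ‖x k * y (n - k)‖ ≤ A * B * (w k * w (n - k)) :=
    calc ‖x k * y (n - k)‖ = ‖x k‖ * ‖y (n - k)‖ := norm_mul _ _
      _ ≤ A * w k * (B * w (n - k)) :=
        mul_le_mul (hx k) (hy _) (norm_nonneg _) (mul_nonneg hA (hw.nonneg k))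
      _ = A * B * (w k * w (n - k)) := by ring
  calc ‖conv x y n‖ ≤ A * B * ∑' k, w k * w (n - k) :=
        tsum_of_norm_bounded ((hw.summable n).hasSum.mul_left (A * B)) norm_term_le
    _ ≤ A * B * (C * w n) := mul_le_mul_of_nonneg_left (hw.tsum_le n) (mul_nonneg hA hB)
    _ = A * (C * B) * w n := by ring

lemma norm_convPow_le (hw : IsSubconvolutive C w) (hw_zero : 1 ≤ w 0) (hB : 0 ≤ B)
    (hx : ∀ n, ‖x n‖ ≤ B * w n) (m : ℕ) (n : ℤ) :
    ‖convPow x m n‖ ≤ (C * B) ^ m * w n := by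
  induction m generalizing n with
  | zero =>
    rcases eq_or_ne n 0 with rfl | hn
    · simpa [convPow] using hw_zero
    · simpa [convPow, hn] using hw.nonneg n
  | succ m ih =>
    have hC : 0 ≤ C := hw.const_nonneg (one_pos.trans_le hw_zero)
    exact hw.norm_conv_le (by positivity) hB ih hx n

lemma norm_tsum_mul_convPow_le {ι : Type*} {a : ι → ℂ} {d : ι → ℕ}
    (hw : IsSubconvolutive C w) (hw_zero : 1 ≤ w 0) (hB : 0 ≤ B)
    (hx : ∀ n, ‖x n‖ ≤ B * w n) (ha : Summable fun i => ‖a i‖ * (C * B) ^ d i) (n : ℤ) :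
    ‖∑' i, a i * convPow x (d i) n‖ ≤ (∑' i, ‖a i‖ * (C * B) ^ d i) * w n := by
  refine tsum_of_norm_bounded (ha.hasSum.mul_right (w n)) fun i => ?_
  rw [norm_mul, mul_assoc]
  exact mul_le_mul_of_nonneg_left (hw.norm_convPow_le hw_zero hB hx (d i) n) (norm_nonneg _)

end IsSubconvolutive

/-- The polynomial weight `n ↦ (|n| + 1) ^ (-α)` on `ℤ`, which measures decay of order `α`. -/
noncomputable def decayWeight (α : ℝ) (n : ℤ) : ℝ := (|(n : ℝ)| + 1) ^ (-α)

section decayWeight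

variable {α : ℝ}

lemma div_rpow_eq_mul_decayWeight (β α : ℝ) (n : ℤ) :
    β / (|(n : ℝ)| + 1) ^ α = β * decayWeight α n := by
  rw [decayWeight, Real.rpow_neg (by positivity), div_eq_mul_inv]

lemma decayWeight_pos (α : ℝ) (n : ℤ) : 0 < decayWeight α n := by
  unfold decayWeight; positivity

lemma decayWeight_zero (α : ℝ) : decayWeight α 0 = 1 := by
  simp [decayWeight]

lemma abs_add_one_mul_decayWeight_add_one (α : ℝ) (n : ℤ) :
    (|(n : ℝ)| + 1) * decayWeight (α + 1) n = decayWeight α n := by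
  have h : 0 < |(n : ℝ)| + 1 := by positivity
  rw [decayWeight, decayWeight, mul_comm, ← Real.rpow_add_one h.ne', neg_add, neg_add_cancel_right]

lemma le_mul_decayWeight_add_one {A B r : ℝ} {n : ℤ} (hA : |(n : ℝ)| * r ≤ A * decayWeight α n)
    (hB : r ≤ B * decayWeight α n) : r ≤ (A + B) * decayWeight (α + 1) n := by
  refine le_of_mul_le_mul_left ?_ (show 0 < |(n : ℝ)| + 1 by positivity)
  calc (|(n : ℝ)| + 1) * r = |(n : ℝ)| * r + r := by ring
    _ ≤ A * decayWeight α n + B * decayWeight α n := add_le_add hA hB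
    _ = (|(n : ℝ)| + 1) * ((A + B) * decayWeight (α + 1) n) := by
      rw [← abs_add_one_mul_decayWeight_add_one α n]; ring

lemma summable_decayWeight (hα : 1 < α) : Summable (decayWeight α) := by
  have summable_nat : Summable fun n : ℕ => ((n : ℝ) + 1) ^ (-α) := by
    simpa using (summable_nat_add_iff 1).2 (Real.summable_nat_rpow.2 (neg_lt_neg hα))
  exact .of_nat_of_neg (by simpa [decayWeight] using summable_nat)
    (by simpa [decayWeight] using summable_nat)

lemma decayWeight_le_two_rpow_mul (hα : 0 ≤ α) {n k : ℤ}
    (hnk : |(n : ℝ)| + 1 ≤ 2 * (|(k : ℝ)| + 1)) :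
    decayWeight α k ≤ 2 ^ α * decayWeight α n := by
  calc decayWeight α k = 2 ^ α * (2 * (|(k : ℝ)| + 1)) ^ (-α) := by
        rw [Real.mul_rpow two_pos.le (by positivity), ← mul_assoc, ← Real.rpow_add two_pos,
          add_neg_cancel, Real.rpow_zero, one_mul, decayWeight]
    _ ≤ 2 ^ α * decayWeight α n := by
        gcongr
        exact Real.rpow_le_rpow_of_nonpos (by positivity) hnk (neg_nonpos.2 hα)

lemma decayWeight_mul_le (hα : 0 ≤ α) (n k : ℤ) :
    decayWeight α k * decayWeight α (n - k) ≤
      2 ^ α * decayWeight α n * (decayWeight α k + decayWeight α (n - k)) := by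
  have hk := (decayWeight_pos α k).le
  have hnk := (decayWeight_pos α (n - k)).le
  have hn : 0 ≤ 2 ^ α * decayWeight α n := mul_nonneg (by positivity) (decayWeight_pos α n).le
  have abs_le : |(n : ℝ)| ≤ |(k : ℝ)| + |((n - k : ℤ) : ℝ)| := by
    simpa using abs_add_le (k : ℝ) ((n - k : ℤ) : ℝ)
  rcases le_total |(k : ℝ)| |((n - k : ℤ) : ℝ)| with h | h
  · calc decayWeight α k * decayWeight α (n - k)
        ≤ decayWeight α k * (2 ^ α * decayWeight α n) :=
          mul_le_mul_of_nonneg_left (decayWeight_le_two_rpow_mul hα (by linarith)) hk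
      _ = 2 ^ α * decayWeight α n * decayWeight α k := mul_comm _ _
      _ ≤ _ := mul_le_mul_of_nonneg_left (le_add_of_nonneg_right hnk) hn
  · calc decayWeight α k * decayWeight α (n - k)
        ≤ 2 ^ α * decayWeight α n * decayWeight α (n - k) :=
          mul_le_mul_of_nonneg_right (decayWeight_le_two_rpow_mul hα (by linarith)) hnk
      _ ≤ _ := mul_le_mul_of_nonneg_left (le_add_of_nonneg_left hk) hn

lemma exists_isSubconvolutive_decayWeight (hα : 1 < α) :
    ∃ C, IsSubconvolutive C (decayWeight α) := by
  have hasSum_bound (n : ℤ) :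
      HasSum (fun k => 2 ^ α * decayWeight α n * (decayWeight α k + decayWeight α (n - k)))
        (2 ^ α * decayWeight α n * (∑' k, decayWeight α k + ∑' k, decayWeight α k)) :=
    have hs := (summable_decayWeight hα).hasSum
    (hs.add ((Equiv.subLeft n).hasSum_iff.2 hs)).mul_left _
  have mul_le (n k : ℤ) := decayWeight_mul_le (zero_le_one.trans hα.le) n k
  have summable_mul (n : ℤ) : Summable fun k => decayWeight α k * decayWeight α (n - k) :=
    .of_nonneg_of_le (fun k => (mul_pos (decayWeight_pos α k) (decayWeight_pos α _)).le)
      (mul_le n) (hasSum_bound n).summable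
  refine ⟨2 ^ α * (2 * ∑' k, decayWeight α k), fun n => (decayWeight_pos α n).le,
    summable_mul, fun n => ?_⟩
  calc ∑' k, decayWeight α k * decayWeight α (n - k)
      ≤ 2 ^ α * decayWeight α n * (∑' k, decayWeight α k + ∑' k, decayWeight α k) :=
        hasSum_le (mul_le n) (summable_mul n).hasSum (hasSum_bound n)
    _ = 2 ^ α * (2 * ∑' k, decayWeight α k) * decayWeight α n := by ring

end decayWeight

/-- With `f z = ∑ i, a i * z ^ d i` entire, `heq` is the delay equation
`deriv x t = κ * f (x (t - τ))` in the Fourier coefficients of `x`. -/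
theorem decay_improvement_general {ι : Type*} {a : ι → ℂ} {d : ι → ℕ}
    (ha : ∀ r : ℝ, Summable fun i => ‖a i‖ * r ^ d i) (κ : ℂ) (τ : ℝ) {α β : ℝ} (hα : 1 < α)
    (hβ : 0 < β) {c : ℤ → ℂ} (hc : ∀ n : ℤ, ‖c n‖ ≤ β / (|(n : ℝ)| + 1) ^ α)
    (heq : ∀ n : ℤ, Complex.I * n * c n =
      κ * ∑' i, a i * convPow c (d i) n * Complex.exp (-(Complex.I * n * τ))) :
    ∃ β' > 0, ∀ n : ℤ, ‖c n‖ ≤ β' / (|(n : ℝ)| + 1) ^ (α + 1) := by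
  simp only [div_rpow_eq_mul_decayWeight] at hc ⊢
  obtain ⟨C, hw⟩ := exists_isSubconvolutive_decayWeight hα
  have hw_zero : 1 ≤ decayWeight α 0 := (decayWeight_zero α).ge
  have hC : 0 ≤ C := hw.const_nonneg (decayWeight_pos α 0)
  set S : ℝ := ∑' i, ‖a i‖ * (C * β) ^ d i
  have hS : 0 ≤ S := tsum_nonneg fun i => by positivity
  have abs_mul_norm_le (n : ℤ) : |(n : ℝ)| * ‖c n‖ ≤ ‖κ‖ * S * decayWeight α n := by
    have norm_exp_eq_one : ‖Complex.exp (-(Complex.I * n * τ))‖ = 1 := by simp [Complex.norm_exp]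
    calc |(n : ℝ)| * ‖c n‖ = ‖Complex.I * n * c n‖ := by simp
      _ = ‖κ‖ * ‖∑' i, a i * convPow c (d i) n‖ := by
        rw [heq, tsum_mul_right, norm_mul, norm_mul, norm_exp_eq_one, mul_one]
      _ ≤ ‖κ‖ * (S * decayWeight α n) := by
        gcongr
        exact hw.norm_tsum_mul_convPow_le hw_zero hβ.le hc (ha _) n
      _ = ‖κ‖ * S * decayWeight α n := (mul_assoc _ _ _).symm
  exact ⟨‖κ‖ * S + β, add_pos_of_nonneg_of_pos (mul_nonneg (norm_nonneg κ) hS) hβ, fun n =>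
    le_mul_decayWeight_add_one (abs_mul_norm_le n) (hc n)⟩

lemma summable_norm_sin_coeff_mul_pow (r : ℝ) :
    Summable fun k : ℕ => ‖((-1) ^ k / (Nat.factorial (2 * k + 1) : ℂ))‖ * r ^ (2 * k + 1) := by
  have odd_injective : Function.Injective fun k : ℕ => 2 * k + 1 := fun j k h => by simpa using h
  simpa [div_eq_inv_mul, Function.comp_def] using
    (Real.summable_pow_div_factorial r).comp_injective odd_injective

/-- Lemma `lem:zwiwykl`: a solution of the Fourier equations with decay of
order `α ≥ 2` has decay of order `α + 1`. -/
theorem decay_improvement (K τ α β : ℝ) (hK : 0 < K) (hτ : 0 < τ) (hα : 2 ≤ α) (hβ : 0 < β)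
    (c : ℤ → ℂ) (hc : ∀ n : ℤ, ‖c n‖ ≤ β / (|(n : ℝ)| + 1) ^ α)
    (heq : ∀ n : ℤ, Complex.I * n * c n =
      -((K / τ : ℝ) : ℂ) *
        ∑' k : ℕ, ((-1) ^ k / (Nat.factorial (2 * k + 1) : ℂ)) * convPow c (2 * k + 1) n *
          Complex.exp (-(Complex.I * n * τ))) :
    ∃ β' > 0, ∀ n : ℤ, ‖c n‖ ≤ β' / (|(n : ℝ)| + 1) ^ (α + 1) :=
  decay_improvement_general summable_norm_sin_coeff_mul_pow _ τ (one_lt_two.trans_le hα) hβ hc heq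
end

section
/- Let K > 0, β > 0, l₀ > 0, and τ̲ ≤ τ̄ be real numbers. Suppose that for each integer l > l₀ there exist c^l ∈ X_β and τ_l ∈ [τ̲, τ̄] such that F(τ_l, c^l)_n = 0 for all |n| ≤ l. Then there exist c⁰ ∈ X_β and τ₀ ∈ [τ̲, τ̄] such that F(τ₀, c⁰)_n = 0 for all n ∈ ℤ. Moreover, if all the c^l lie in a set D ⊆ ℂ^ℤ that is closed in the product topology, then c⁰ can be chosen with c⁰ ∈ D. -/
open scoped Real
open Complex Filter

/-- The map `F(τ,c)_n = i n τ e^{inτ} c_n + K Σ_k ((-1)^k/(2k+1)!) (c^{*(2k+1)})_n`. -/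
noncomputable def Fmap (K τ : ℝ) (c : ℤ → ℂ) : ℤ → ℂ := fun n =>
  Complex.I * n * τ * Complex.exp (Complex.I * n * τ) * c n +
    K * ∑' k : ℕ, ((-1) ^ k / (Nat.factorial (2 * k + 1) : ℂ)) * convPow c (2 * k + 1) n

/-!
Sequences dominated by a fixed summable weight `w` form a compact set in the product topology. On
that set `‖(c^{*k})_n‖ ≤ (∑ w)^k`, so the Weierstrass M-test, with the series of `sinh (∑ w)` as
majorant, makes each coordinate of `F` continuous. A cluster point of the approximate zeros is
therefore a zero of every coordinate.
-/

open Set Topology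

lemma exists_mem_forall_eq_of_eventually_eq {α κ X Y : Type*} [TopologicalSpace X]
    [TopologicalSpace Y] [T2Space Y] {L : Filter α} [L.NeBot] {s : Set X} (hs : IsCompact s)
    {g : κ → X → Y} (hg : ∀ n, ContinuousOn (g n) s) {u : α → X} (hu : ∀ᶠ l in L, u l ∈ s)
    {y : κ → Y} (hgu : ∀ n, ∀ᶠ l in L, g n (u l) = y n) :
    ∃ x ∈ s, ∀ n, g n x = y n := by
  let U := Ultrafilter.of (L.map u)
  have hUL : (U : Filter X) ≤ L.map u := Ultrafilter.of_le _
  have hUs : (U : Filter X) ≤ 𝓟 s := hUL.trans (le_principal_iff.2 hu)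
  obtain ⟨x, hxs, hUx⟩ := hs.ultrafilter_le_nhds U hUs
  refine ⟨x, hxs, fun n => ?_⟩
  have hlim : Tendsto (g n) U (𝓝 (g n x)) := (hg n x hxs).mono_left (le_inf hUx hUs)
  have hconst : ∀ᶠ z in (U : Filter X), g n z = y n := hUL (hgu n)
  exact tendsto_nhds_unique hlim (tendsto_const_nhds.congr' (hconst.mono fun _ => Eq.symm))

section WeightBox

variable {κ : Type*}

/-- The families dominated termwise in norm by the weight `w`. A summable weight makes this a set
on which convolution series converge uniformly. -/
def weightBox (w : κ → ℝ) : Set (κ → ℂ) := {x | ∀ n, ‖x n‖ ≤ w n}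

lemma weightBox_eq_pi_closedBall (w : κ → ℝ) :
    weightBox w = univ.pi fun n => Metric.closedBall 0 (w n) := by
  ext x
  simp [weightBox]

lemma isCompact_weightBox (w : κ → ℝ) : IsCompact (weightBox w) := by
  rw [weightBox_eq_pi_closedBall]
  exact isCompact_univ_pi fun n => isCompact_closedBall 0 (w n)

end WeightBox

section Convolution

variable {w : ℤ → ℝ}

lemma hasSum_mul_comp_sub_left (hw : Summable w) (M : ℝ) (n : ℤ) :
    HasSum (fun k => M * w (n - k)) (M * ∑' k, w k) :=
  ((Equiv.subLeft n).hasSum_iff.2 hw.hasSum).mul_left M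

lemma norm_mul_comp_sub_left_le {x y : ℤ → ℂ} {M : ℝ} (hx : ∀ k, ‖x k‖ ≤ M)
    (hy : y ∈ weightBox w) (n k : ℤ) : ‖x k * y (n - k)‖ ≤ M * w (n - k) :=
  norm_mul_le_of_le (hx k) (hy (n - k))

lemma norm_conv_le (hw : Summable w) {x y : ℤ → ℂ} {M : ℝ} (hx : ∀ k, ‖x k‖ ≤ M)
    (hy : y ∈ weightBox w) (n : ℤ) : ‖conv x y n‖ ≤ M * ∑' k, w k :=
  tsum_of_norm_bounded (hasSum_mul_comp_sub_left hw M n) (norm_mul_comp_sub_left_le hx hy n)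

lemma continuousOn_conv {A : Type*} [TopologicalSpace A] {s : Set A} {x y : A → ℤ → ℂ} {M : ℝ}
    (hw : Summable w) (hx : ∀ k, ContinuousOn (fun a => x a k) s)
    (hy : ∀ k, ContinuousOn (fun a => y a k) s) (hxM : ∀ a ∈ s, ∀ k, ‖x a k‖ ≤ M)
    (hyw : ∀ a ∈ s, y a ∈ weightBox w) (n : ℤ) :
    ContinuousOn (fun a => conv (x a) (y a) n) s :=
  continuousOn_tsum (fun k => (hx k).mul (hy (n - k))) (hasSum_mul_comp_sub_left hw M n).summable
    fun k a ha => norm_mul_comp_sub_left_le (hxM a ha) (hyw a ha) n k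

lemma norm_convPow_le (hw : Summable w) {x : ℤ → ℂ} (hx : x ∈ weightBox w) (k : ℕ) (n : ℤ) :
    ‖convPow x k n‖ ≤ (∑' m, w m) ^ k := by
  induction k generalizing n with
  | zero =>
    simp only [convPow, pow_zero]
    split_ifs <;> simp
  | succ k ih => exact norm_conv_le hw ih hx n

lemma continuousOn_convPow (hw : Summable w) (k : ℕ) (n : ℤ) :
    ContinuousOn (fun x => convPow x k n) (weightBox w) := by
  induction k generalizing n with
  | zero => exact continuousOn_const
  | succ k ih =>
    exact continuousOn_conv hw ih (fun m => (continuous_apply m).continuousOn)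
      (fun x hx => norm_convPow_le hw hx k) (fun x hx => hx) n

/-- The sine of a sequence in the convolution algebra, given by its power series. It is the
nonlinear part of `Fmap`. -/
noncomputable def convSin (c : ℤ → ℂ) (n : ℤ) : ℂ :=
  ∑' k : ℕ, ((-1) ^ k / (Nat.factorial (2 * k + 1) : ℂ)) * convPow c (2 * k + 1) n

lemma norm_convSin_term_le (hw : Summable w) {c : ℤ → ℂ} (hc : c ∈ weightBox w) (n : ℤ) (k : ℕ) :
    ‖((-1) ^ k / (Nat.factorial (2 * k + 1) : ℂ)) * convPow c (2 * k + 1) n‖ ≤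
      (∑' m, w m) ^ (2 * k + 1) / Nat.factorial (2 * k + 1) :=
  calc
    _ = ‖convPow c (2 * k + 1) n‖ / Nat.factorial (2 * k + 1) := by
      simp [div_eq_inv_mul]
    _ ≤ _ := by
      gcongr
      exact norm_convPow_le hw hc (2 * k + 1) n

lemma continuousOn_convSin (hw : Summable w) (n : ℤ) :
    ContinuousOn (fun c => convSin c n) (weightBox w) :=
  continuousOn_tsum (fun k => (continuousOn_convPow hw (2 * k + 1) n).const_mul _)
    (Real.hasSum_sinh (∑' m, w m)).summable fun k _ hc => norm_convSin_term_le hw hc n k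

lemma continuousOn_Fmap (K : ℝ) (hw : Summable w) (n : ℤ) :
    ContinuousOn (fun p : (ℤ → ℂ) × ℝ => Fmap K p.2 p.1 n) (weightBox w ×ˢ univ) := by
  have hlinear : Continuous fun p : (ℤ → ℂ) × ℝ =>
      Complex.I * n * p.2 * Complex.exp (Complex.I * n * p.2) * p.1 n := by
    fun_prop
  have hsin : ContinuousOn (fun p : (ℤ → ℂ) × ℝ => convSin p.1 n) (weightBox w ×ˢ univ) :=
    (continuousOn_convSin hw n).comp continuousOn_fst fun _ hp => hp.1
  exact hlinear.continuousOn.add (hsin.const_mul (K : ℂ))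

end Convolution

lemma summable_div_abs_int_add_one_pow (β : ℝ) {p : ℕ} (hp : 1 < p) :
    Summable fun n : ℤ => β / (|(n : ℝ)| + 1) ^ p := by
  have hnat : Summable fun n : ℕ => β / ((n : ℝ) + 1) ^ p := by
    simpa [div_eq_mul_inv] using
      ((summable_nat_add_iff 1).2 (Real.summable_one_div_nat_pow.2 hp)).mul_left β
  exact Summable.of_nat_of_neg (by simpa using hnat) (by simpa using hnat)

lemma isClosed_setOf_memX (β : ℝ) : IsClosed {x | memX β x} := by
  simp only [memX, ofPred_and, ofPred_forall]
  exact (isClosed_iInter fun n => isClosed_le (by fun_prop) continuous_const).inter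
    (isClosed_iInter fun n => isClosed_eq (by fun_prop)
      (Complex.continuous_conj.comp (continuous_apply n)))

theorem galerkin_limit_general {α : Type*} {L : Filter α} [L.NeBot] (K : ℝ) {w : ℤ → ℝ}
    (hw : Summable w) {S : Set (ℤ → ℂ)} (hS : IsClosed S) (hSw : S ⊆ weightBox w) {T : Set ℝ}
    (hT : IsCompact T) {c : α → ℤ → ℂ} {τ : α → ℝ} (hc : ∀ᶠ l in L, c l ∈ S)
    (hτ : ∀ᶠ l in L, τ l ∈ T) (hzero : ∀ n, ∀ᶠ l in L, Fmap K (τ l) (c l) n = 0) :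
    ∃ c₀ ∈ S, ∃ τ₀ ∈ T, ∀ n, Fmap K τ₀ c₀ n = 0 := by
  have hcompact : IsCompact (S ×ˢ T) := ((isCompact_weightBox w).of_isClosed_subset hS hSw).prod hT
  have hcont (n : ℤ) : ContinuousOn (fun p : (ℤ → ℂ) × ℝ => Fmap K p.2 p.1 n) (S ×ˢ T) :=
    (continuousOn_Fmap K hw n).mono (prod_mono hSw (subset_univ T))
  obtain ⟨⟨c₀, τ₀⟩, ⟨hc₀, hτ₀⟩, hzero₀⟩ :=
    exists_mem_forall_eq_of_eventually_eq (u := fun l => (c l, τ l)) hcompact hcont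
      (hc.and hτ) hzero
  exact ⟨c₀, hc₀, τ₀, hτ₀, hzero₀⟩

/-- Lemma `lem:granica`: zeros of all Galerkin projections accumulate to a
zero of `F`; moreover the limit stays in any closed set `D` containing the `c^l`. -/
theorem galerkin_limit (K β : ℝ) (hK : 0 < K) (hβ : 0 < β) (l₀ : ℕ) (hl₀ : 0 < l₀)
    (τlo τhi : ℝ) (hτ : τlo ≤ τhi)
    (c : ℕ → ℤ → ℂ) (τs : ℕ → ℝ)
    (hc : ∀ l : ℕ, l₀ < l → memX β (c l))
    (hτs : ∀ l : ℕ, l₀ < l → τs l ∈ Set.Icc τlo τhi)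
    (hzero : ∀ l : ℕ, l₀ < l → ∀ n : ℤ, |n| ≤ (l : ℤ) → Fmap K (τs l) (c l) n = 0)
    (D : Set (ℤ → ℂ)) (hD : IsClosed D) (hcD : ∀ l : ℕ, l₀ < l → c l ∈ D) :
    ∃ c₀ : ℤ → ℂ, ∃ τ₀ : ℝ, memX β c₀ ∧ τ₀ ∈ Set.Icc τlo τhi ∧
      (∀ n : ℤ, Fmap K τ₀ c₀ n = 0) ∧ c₀ ∈ D := by
  have hlarge : ∀ᶠ l in atTop, l₀ < l := eventually_gt_atTop l₀
  have hzero' (n : ℤ) : ∀ᶠ l in atTop, Fmap K (τs l) (c l) n = 0 := by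
    filter_upwards [hlarge, eventually_ge_atTop n.natAbs] with l hl hn
    exact hzero l hl n (by rw [Int.abs_eq_natAbs]; exact_mod_cast hn)
  obtain ⟨c₀, ⟨hX, hc₀D⟩, τ₀, hτ₀, hzero₀⟩ := galerkin_limit_general K
    (summable_div_abs_int_add_one_pow β one_lt_two) ((isClosed_setOf_memX β).inter hD)
    (fun _ hx => hx.1.1) isCompact_Icc (hlarge.mono fun l hl => ⟨hc l hl, hcD l hl⟩)
    (hlarge.mono hτs) hzero'
  exact ⟨c₀, τ₀, hX, hτ₀, hzero₀, hc₀D⟩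
end
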